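/- Let −1 < β < 0 and ν > −1/2. Then for all x > 0, ( e^{−βx} K_ν(x) / x^{ν−1} ) · ∫_0^x e^{βt} t^ν I_ν(t) dt < (2ν+7) / (2(2ν+1)(1+β)). -/

import Mathlib

open Real MeasureTheory

/-- Modified Bessel function of the first kind, `I_ν(x) = ∑_{k} (x/2)^{ν+2k} / (Γ(ν+k+1) k!)`. -/
noncomputable def besselI (ν x : ℝ) : ℝ :=
  ∑' k : ℕ, (x / 2) ^ (ν + 2 * (k : ℝ)) / (Real.Gamma (ν + (k : ℝ) + 1) * (Nat.factorial k : ℝ))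

/-- Modified Bessel function of the second kind, `K_ν(x) = ∫_0^∞ e^{-x cosh t} cosh(ν t) dt`. -/
noncomputable def besselK (ν x : ℝ) : ℝ :=
  ∫ t in Set.Ioi (0 : ℝ), Real.exp (-x * Real.cosh t) * Real.cosh (ν * t)

/-- Lower incomplete gamma function `γ(a, x) = ∫_0^x t^{a-1} e^{-t} dt`. -/
noncomputable def lowerIncGamma (a x : ℝ) : ℝ :=
  ∫ t in (0 : ℝ)..x, t ^ (a - 1) * Real.exp (-t)

/-!
Both `(I_ν, I_{ν+1})` and `(K_ν, -K_{ν+1})` solve the same first-order system, whence the Wronskian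
`x (I_ν K_{ν+1} + I_{ν+1} K_ν)` is constant, and letting `x → 0` bounds it by `1`.

For `ν ≥ 1/2`, the same system yields `I_{ν+1} / I_ν ≥ 1 - (ν + 1/2) / x` and
`K_{ν+1} / K_ν ≥ 1 + (ν + 1/2) / x`. In the Wronskian the corrections cancel and leave
`x I_ν K_ν ≤ 1/2`, while the first bound alone gives
`(1 + β) ∫₀ˣ e^{βt} t^ν I_ν ≤ e^{βx} x^ν I_ν(x)` by differentiation.

For `-1/2 < ν < 1/2`, put `H(t) = t^{ν+1} (I_ν(t) + I_{ν+1}(t))`. Since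
`(e^{βt} H)' = e^{βt} ((1 + β) H + (2ν + 1) t^ν I_ν)`, the case `β = -1` integrates `e^{-t} t^ν I_ν`
exactly, and the general case bounds `∫₀ˣ e^{βt} t^{ν+1} I_ν`. Combining the two gives
`(1 + β) x ∫₀ˣ e^{βt} t^ν I_ν ≤ (1 + 1/(2ν + 1)) e^{βx} H(x)`, and `H(x) K_ν(x) ≤ x^ν` by the
Wronskian bound and `K_ν ≤ K_{ν+1}`.
-/

section Bessel

open Filter Topology Set

/-- The first-order form, on `(0, ∞)`, of the modified Bessel equation of order `ν`: `f` is a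
solution and `g = f' - (ν / x) f` is its companion of order `ν + 1`. The two basic instances are
`(I_ν, I_{ν+1})` and `(K_ν, -K_{ν+1})`. -/
structure IsBesselPair (ν : ℝ) (f g : ℝ → ℝ) : Prop where
  hasDerivAt_fst : ∀ x, 0 < x → HasDerivAt f (g x + ν / x * f x) x
  hasDerivAt_snd : ∀ x, 0 < x → HasDerivAt g (f x - (ν + 1) / x * g x) x

namespace IsBesselPair

variable {ν : ℝ} {f g f₁ g₁ f₂ g₂ : ℝ → ℝ} {x y : ℝ}

theorem mul_wronskian_eq (h₁ : IsBesselPair ν f₁ g₁) (h₂ : IsBesselPair ν f₂ g₂)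
    (hx : 0 < x) (hy : 0 < y) :
    x * (f₂ x * g₁ x - f₁ x * g₂ x) = y * (f₂ y * g₁ y - f₁ y * g₂ y) := by
  have hderiv : ∀ z ∈ Ioi (0 : ℝ),
      HasDerivAt (fun z ↦ z * (f₂ z * g₁ z - f₁ z * g₂ z)) 0 z := by
    intro z hz
    have hz0 : z ≠ 0 := ne_of_gt hz
    refine ((hasDerivAt_id' z).mul
      (((h₂.hasDerivAt_fst z hz).mul (h₁.hasDerivAt_snd z hz)).sub
        ((h₁.hasDerivAt_fst z hz).mul (h₂.hasDerivAt_snd z hz)))).congr_deriv ?_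
    simp only [Pi.mul_apply, Pi.sub_apply]
    field_simp
    ring
  exact isOpen_Ioi.is_const_of_deriv_eq_zero isPreconnected_Ioi
    (fun z hz ↦ (hderiv z hz).differentiableAt.differentiableWithinAt)
    (fun z hz ↦ (hderiv z hz).deriv) hx hy

-- With `u = √y * f`, which solves `u'' = (1 + (ν ^ 2 - 1 / 4) / y ^ 2) u`, the function is
-- `exp (σ * y) * (u' - σ * u)`.
theorem hasDerivAt_exp_mul_sqrt_mul (h : IsBesselPair ν f g) {σ : ℝ} (hσ : σ ^ 2 = 1)
    (hx : 0 < x) :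
    HasDerivAt (fun y ↦ exp (σ * y) * √y * (g y - (σ - (ν + 1 / 2) / y) * f y))
      (exp (σ * x) * √x * (f x * ((ν ^ 2 - 1 / 4) / x ^ 2))) x := by
  have hexp : HasDerivAt (fun y ↦ exp (σ * y)) (exp (σ * x) * σ) x := by
    simpa using ((hasDerivAt_id' x).const_mul σ).exp
  have hsqrt : HasDerivAt (fun y ↦ √y) (√x / (2 * x)) x := by
    refine (hasDerivAt_sqrt hx.ne').congr_deriv ?_
    rw [div_eq_div_iff (by positivity) (by positivity)]
    linear_combination -2 * mul_self_sqrt hx.le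
  have hcoeff : HasDerivAt (fun y ↦ σ - (ν + 1 / 2) / y) ((ν + 1 / 2) / x ^ 2) x := by
    simpa [div_eq_mul_inv] using ((hasDerivAt_inv hx.ne').const_mul (ν + 1 / 2)).const_sub σ
  refine ((hexp.mul hsqrt).mul ((h.hasDerivAt_snd x hx).sub
    (hcoeff.mul (h.hasDerivAt_fst x hx)))).congr_deriv ?_
  simp only [Pi.mul_apply, Pi.sub_apply]
  field_simp
  linear_combination -16 * x ^ 2 * f x * hσ

theorem monotoneOn_exp_mul_sqrt_mul (h : IsBesselPair ν f g) {σ : ℝ} (hσ : σ ^ 2 = 1)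
    (hν : 1 / 2 ≤ ν) (hf : ∀ x, 0 < x → 0 ≤ f x) :
    MonotoneOn (fun y ↦ exp (σ * y) * √y * (g y - (σ - (ν + 1 / 2) / y) * f y)) (Ioi 0) := by
  refine monotoneOn_of_hasDerivWithinAt_nonneg (convex_Ioi 0)
    (fun y hy ↦ (h.hasDerivAt_exp_mul_sqrt_mul hσ hy).continuousAt.continuousWithinAt)
    (fun y hy ↦ (h.hasDerivAt_exp_mul_sqrt_mul hσ (interior_subset hy)).hasDerivWithinAt)
    fun y hy ↦ ?_
  have := hf y (interior_subset hy)
  have : 0 ≤ ν ^ 2 - 1 / 4 := by nlinarith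
  positivity

end IsBesselPair

section BesselK

theorem exp_neg_mul_cosh_mul_cosh_le {x t : ℝ} (hx : 0 < x) (ht : 0 ≤ t) (ν : ℝ) :
    exp (-x * cosh t) * cosh (ν * t) ≤ exp ((|ν| + 1) ^ 2 / x) * exp (-t) := by
  have hcosh : cosh (ν * t) ≤ exp (|ν| * t) := by
    have hνt : 0 ≤ |ν| * t := by positivity
    rw [← cosh_abs, abs_mul, abs_of_nonneg ht, cosh_eq]
    linarith [exp_le_exp.2 (neg_le_self hνt)]
  have hquad : t ^ 2 / 4 ≤ cosh t := by
    rw [cosh_eq]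
    linarith [quadratic_le_exp_of_nonneg ht, exp_pos (-t)]
  have hamgm : (|ν| + 1) * t ≤ (|ν| + 1) ^ 2 / x + x * (t ^ 2 / 4) := by
    have hsq : (|ν| + 1) ^ 2 / x + x * (t ^ 2 / 4) - (|ν| + 1) * t
        = (|ν| + 1 - x * t / 2) ^ 2 / x := by
      field_simp
      ring
    have : 0 ≤ (|ν| + 1 - x * t / 2) ^ 2 / x := by positivity
    linarith
  calc exp (-x * cosh t) * cosh (ν * t) ≤ exp (-x * (t ^ 2 / 4)) * exp (|ν| * t) := by
        gcongr ?_ * ?_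
        exact exp_le_exp.2 (mul_le_mul_of_nonpos_left hquad (neg_nonpos.2 hx.le))
    _ ≤ exp ((|ν| + 1) ^ 2 / x) * exp (-t) := by
        rw [← exp_add, ← exp_add, exp_le_exp]
        linarith

theorem integrableOn_exp_neg_mul_cosh_mul_cosh {x : ℝ} (hx : 0 < x) (ν : ℝ) :
    IntegrableOn (fun t ↦ exp (-x * cosh t) * cosh (ν * t)) (Ioi 0) := by
  refine Integrable.mono' ((exp_neg_integrableOn_Ioi 0 one_pos).const_mul (exp ((|ν| + 1) ^ 2 / x)))
    (Continuous.aestronglyMeasurable (by fun_prop)) ?_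
  filter_upwards [ae_restrict_mem measurableSet_Ioi] with t ht
  rw [norm_of_nonneg (mul_nonneg (exp_pos _).le (cosh_pos _).le), neg_one_mul]
  exact exp_neg_mul_cosh_mul_cosh_le hx (le_of_lt ht) ν

theorem tendsto_exp_neg_mul_cosh_mul_sinh_atTop {x : ℝ} (hx : 0 < x) (ν : ℝ) :
    Tendsto (fun t ↦ exp (-x * cosh t) * sinh (ν * t)) atTop (𝓝 0) := by
  have hexp := tendsto_exp_neg_atTop_nhds_zero.const_mul (exp ((|ν| + 1) ^ 2 / x))
  rw [mul_zero] at hexp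
  refine squeeze_zero_norm' ?_ hexp
  filter_upwards [eventually_ge_atTop 0] with t ht
  refine le_trans ?_ (exp_neg_mul_cosh_mul_cosh_le hx ht ν)
  rw [norm_mul, norm_of_nonneg (exp_pos _).le, norm_eq_abs, abs_sinh, ← cosh_abs (ν * t)]
  gcongr
  exact (sinh_lt_cosh _).le

theorem besselK_nonneg (ν x : ℝ) : 0 ≤ besselK ν x :=
  integral_nonneg fun _ ↦ mul_nonneg (exp_pos _).le (cosh_pos _).le

theorem besselK_le_besselK_of_abs_le {μ ν x : ℝ} (hx : 0 < x) (h : |μ| ≤ |ν|) :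
    besselK μ x ≤ besselK ν x := by
  refine integral_mono (integrableOn_exp_neg_mul_cosh_mul_cosh hx μ)
    (integrableOn_exp_neg_mul_cosh_mul_cosh hx ν) fun t ↦ ?_
  refine mul_le_mul_of_nonneg_left (cosh_le_cosh.2 ?_) (exp_pos _).le
  rw [abs_mul, abs_mul]
  gcongr

theorem antitoneOn_besselK (ν : ℝ) : AntitoneOn (besselK ν) (Ioi 0) := by
  intro x hx y hy hxy
  refine integral_mono (integrableOn_exp_neg_mul_cosh_mul_cosh hy ν)
    (integrableOn_exp_neg_mul_cosh_mul_cosh hx ν) fun t ↦ ?_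
  have := cosh_pos t
  have := cosh_pos (ν * t)
  dsimp only
  gcongr

theorem besselK_succ_sub_besselK_pred {x : ℝ} (hx : 0 < x) (ν : ℝ) :
    besselK (ν + 1) x - besselK (ν - 1) x = 2 * ν / x * besselK ν x := by
  have hsucc := integrableOn_exp_neg_mul_cosh_mul_cosh hx (ν + 1)
  have hpred := integrableOn_exp_neg_mul_cosh_mul_cosh hx (ν - 1)
  have hself := integrableOn_exp_neg_mul_cosh_mul_cosh hx ν
  have hdiff : IntegrableOn (fun t ↦ x / 2 * (exp (-x * cosh t) * cosh ((ν + 1) * t) -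
      exp (-x * cosh t) * cosh ((ν - 1) * t))) (Ioi 0) := (hsucc.sub hpred).const_mul (x / 2)
  have hderiv : ∀ t : ℝ, HasDerivAt (fun t ↦ exp (-x * cosh t) * sinh (ν * t))
      (ν * (exp (-x * cosh t) * cosh (ν * t)) - x / 2 *
        (exp (-x * cosh t) * cosh ((ν + 1) * t) - exp (-x * cosh t) * cosh ((ν - 1) * t))) t := by
    intro t
    have hsinh := ((hasDerivAt_id' t).const_mul ν).sinh
    refine ((((hasDerivAt_cosh t).const_mul (-x)).exp).mul hsinh).congr_deriv ?_
    rw [add_mul, sub_mul, one_mul, cosh_add, cosh_sub]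
    ring
  have hparts := integral_Ioi_of_hasDerivAt_of_tendsto (a := 0)
    (Continuous.continuousWithinAt (by fun_prop)) (fun t _ ↦ hderiv t)
    ((hself.const_mul ν).sub hdiff) (tendsto_exp_neg_mul_cosh_mul_sinh_atTop hx ν)
  have hrec : ν * besselK ν x - x / 2 * (besselK (ν + 1) x - besselK (ν - 1) x) = 0 := by
    simp only [besselK]
    rw [← integral_sub hsucc hpred, ← integral_const_mul, ← integral_const_mul,
      ← integral_sub (hself.const_mul ν) hdiff, hparts, mul_zero, sinh_zero, mul_zero, sub_zero]
  field_simp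
  linarith

theorem hasDerivAt_besselK {x : ℝ} (hx : 0 < x) (ν : ℝ) :
    HasDerivAt (besselK ν) (-(besselK (ν - 1) x + besselK (ν + 1) x) / 2) x := by
  have hsum : ∀ {y : ℝ}, 0 < y → IntegrableOn (fun t ↦ exp (-y * cosh t) * cosh ((ν - 1) * t) +
      exp (-y * cosh t) * cosh ((ν + 1) * t)) (Ioi 0) := fun hy ↦
    (integrableOn_exp_neg_mul_cosh_mul_cosh hy (ν - 1)).add
      (integrableOn_exp_neg_mul_cosh_mul_cosh hy (ν + 1))
  have hderiv := (hasDerivAt_integral_of_dominated_loc_of_deriv_le (μ := volume.restrict (Ioi 0))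
    (F := fun y t ↦ exp (-y * cosh t) * cosh (ν * t))
    (F' := fun y t ↦ -(exp (-y * cosh t) * cosh ((ν - 1) * t) +
      exp (-y * cosh t) * cosh ((ν + 1) * t)) / 2)
    (bound := fun t ↦ (exp (-(x / 2) * cosh t) * cosh ((ν - 1) * t) +
      exp (-(x / 2) * cosh t) * cosh ((ν + 1) * t)) / 2)
    (s := Ioi (x / 2)) (Ioi_mem_nhds (half_lt_self hx))
    (.of_forall fun y ↦ Continuous.aestronglyMeasurable (by fun_prop))
    (integrableOn_exp_neg_mul_cosh_mul_cosh hx ν)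
    (Continuous.aestronglyMeasurable (by fun_prop))
    (.of_forall fun t y hy ↦ ?_) ((hsum (half_pos hx)).div_const 2)
    (.of_forall fun t y _ ↦ ?_)).2
  · rwa [integral_div, integral_neg, integral_add
      (integrableOn_exp_neg_mul_cosh_mul_cosh hx (ν - 1))
      (integrableOn_exp_neg_mul_cosh_mul_cosh hx (ν + 1))] at hderiv
  · have := cosh_pos t
    have := cosh_pos ((ν - 1) * t)
    have := cosh_pos ((ν + 1) * t)
    have hle : exp (-y * cosh t) ≤ exp (-(x / 2) * cosh t) := by
      gcongr
      exact le_of_lt hy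
    rw [norm_div, norm_neg, norm_of_nonneg (by positivity), norm_of_nonneg zero_le_two]
    gcongr
  · refine ((((hasDerivAt_id' y).neg.mul_const (cosh t)).exp).mul_const
      (cosh (ν * t))).congr_deriv ?_
    rw [add_mul, sub_mul, one_mul, cosh_add, cosh_sub]
    simp only [Pi.neg_apply]
    ring

theorem isBesselPair_besselK (ν : ℝ) :
    IsBesselPair ν (besselK ν) fun x ↦ -besselK (ν + 1) x where
  hasDerivAt_fst x hx := by
    refine (hasDerivAt_besselK hx ν).congr_deriv ?_
    linear_combination (1 / 2) * besselK_succ_sub_besselK_pred hx ν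
  hasDerivAt_snd x hx := by
    have hrec := besselK_succ_sub_besselK_pred hx (ν + 1)
    refine (hasDerivAt_besselK hx (ν + 1)).neg.congr_deriv ?_
    rw [add_sub_cancel_right] at hrec ⊢
    linear_combination (1 / 2) * hrec

theorem integral_exp_mul_mul_exp_neg_mul_exp {μ r : ℝ} (hμ : 0 < μ) (hr : 0 < r) :
    ∫ t, exp (μ * t) * exp (-(r * exp t)) = (1 / r) ^ μ * Gamma μ := by
  rw [← integral_rpow_mul_exp_neg_mul_Ioi hμ hr, ← range_exp, ← image_univ,
    integral_image_eq_integral_abs_deriv_smul MeasurableSet.univ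
      (fun t _ ↦ (hasDerivAt_exp t).hasDerivWithinAt) exp_injective.injOn, setIntegral_univ]
  refine integral_congr_ae (.of_forall fun t ↦ ?_)
  simp only [smul_eq_mul, abs_exp, ← exp_mul, ← exp_add]
  ring_nf

theorem integrable_exp_mul_mul_exp_neg_mul_exp {μ r : ℝ} (hμ : 0 < μ) (hr : 0 < r) :
    Integrable fun t ↦ exp (μ * t) * exp (-(r * exp t)) := by
  refine .of_integral_ne_zero ?_
  rw [integral_exp_mul_mul_exp_neg_mul_exp hμ hr]
  positivity

-- The substitution `u = (x / 2) e ^ t` after dropping `e ^ (-t)` from `2 cosh t`.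
theorem besselK_le_rpow_mul_Gamma {μ x : ℝ} (hμ : 0 < μ) (hx : 0 < x) :
    besselK μ x ≤ (2 / x) ^ μ * Gamma μ / 2 := by
  set φ : ℝ → ℝ := fun t ↦ exp (μ * t) * exp (-(x / 2 * exp t)) with hφ
  have hφ_int : Integrable φ := integrable_exp_mul_mul_exp_neg_mul_exp hμ (half_pos hx)
  have hpoint : ∀ t, exp (-x * cosh t) * cosh (μ * t) ≤ (φ t + φ (-t)) / 2 := by
    intro t
    have hpos : exp (-x * cosh t) ≤ exp (-(x / 2 * exp t)) := by
      rw [exp_le_exp, cosh_eq]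
      nlinarith [exp_pos (-t)]
    have hneg : exp (-x * cosh t) ≤ exp (-(x / 2 * exp (-t))) := by
      rw [exp_le_exp, cosh_eq]
      nlinarith [exp_pos t]
    simp only [hφ]
    rw [cosh_eq (μ * t), mul_neg]
    nlinarith [mul_le_mul_of_nonneg_left hpos (exp_pos (μ * t)).le,
      mul_le_mul_of_nonneg_left hneg (exp_pos (-(μ * t))).le]
  calc besselK μ x ≤ ∫ t in Ioi 0, (φ t + φ (-t)) / 2 :=
        integral_mono (integrableOn_exp_neg_mul_cosh_mul_cosh hx μ)
          ((hφ_int.integrableOn.add hφ_int.comp_neg.integrableOn).div_const 2) hpoint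
    _ = (∫ t, φ t) / 2 := by
        rw [integral_div, integral_add hφ_int.integrableOn hφ_int.comp_neg.integrableOn,
          integral_comp_neg_Ioi, neg_zero, add_comm,
          intervalIntegral.integral_Iic_add_Ioi hφ_int.integrableOn hφ_int.integrableOn]
    _ = (2 / x) ^ μ * Gamma μ / 2 := by
        rw [integral_exp_mul_mul_exp_neg_mul_exp hμ (half_pos hx), one_div_div]

theorem one_add_div_mul_besselK_le_besselK_succ {ν x : ℝ} (hν : 1 / 2 ≤ ν) (hx : 0 < x) :
    (1 + (ν + 1 / 2) / x) * besselK ν x ≤ besselK (ν + 1) x := by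
  have hmono := (isBesselPair_besselK ν).monotoneOn_exp_mul_sqrt_mul (σ := -1) (by norm_num) hν
    fun x _ ↦ besselK_nonneg ν x
  set D : ℝ → ℝ := fun y ↦
    exp (-1 * y) * √y * (-besselK (ν + 1) y - (-1 - (ν + 1 / 2) / y) * besselK ν y)
  have hbound : ∀ᶠ y in atTop, D y ≤ y ^ (1 / 2 : ℝ) * exp (-1 * y) *
      ((1 + (ν + 1 / 2)) * besselK ν 1) := by
    filter_upwards [eventually_ge_atTop 1] with y hy
    have hy0 : 0 < y := one_pos.trans_le hy
    have hK := antitoneOn_besselK ν (mem_Ioi.2 one_pos) (mem_Ioi.2 hy0) hy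
    have hKnonneg := besselK_nonneg ν y
    have hdiv : (ν + 1 / 2) / y ≤ ν + 1 / 2 := div_le_self (by linarith) hy
    calc D y ≤ exp (-1 * y) * √y * ((1 + (ν + 1 / 2) / y) * besselK ν y) := by
          refine mul_le_mul_of_nonneg_left ?_ (by positivity)
          linarith [besselK_nonneg (ν + 1) y]
      _ ≤ exp (-1 * y) * √y * ((1 + (ν + 1 / 2)) * besselK ν 1) := by gcongr
      _ = _ := by rw [sqrt_eq_rpow]; ring
  have hlim : Tendsto (fun y : ℝ ↦ y ^ (1 / 2 : ℝ) * exp (-1 * y) *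
      ((1 + (ν + 1 / 2)) * besselK ν 1)) atTop (𝓝 0) := by
    simpa using (tendsto_rpow_mul_exp_neg_mul_atTop_nhds_zero (1 / 2) 1 one_pos).mul_const
      ((1 + (ν + 1 / 2)) * besselK ν 1)
  have hnonpos : D x ≤ 0 := by
    refine ge_of_tendsto hlim ?_
    filter_upwards [hbound, eventually_ge_atTop x] with y hy hxy
    exact (hmono hx (hx.trans_le hxy) hxy).trans hy
  have := nonpos_of_mul_nonpos_right hnonpos (by positivity)
  linarith

end BesselK

section BesselI

/-- The Bessel–Clifford function `z ↦ ∑ k, z ^ k / (Γ(ν + k + 1) k!)`, through which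
`I_ν(x) = (x / 2) ^ ν * besselClifford ν ((x / 2) ^ 2)`. It is entire for every real `ν`: at the
poles of `Γ` the convention `Γ = 0`, `1 / 0 = 0` agrees with `1 / Γ = 0`. -/
noncomputable def besselClifford (ν z : ℝ) : ℝ :=
  ∑' k : ℕ, z ^ k / (Gamma (ν + k + 1) * k.factorial)

theorem summable_besselClifford (ν z : ℝ) :
    Summable fun k : ℕ ↦ z ^ k / (Gamma (ν + k + 1) * k.factorial) := by
  refine (summable_pow_div_factorial |z|).of_norm_bounded_eventually_nat ?_
  have hlarge : Tendsto (fun k : ℕ ↦ ν + k + 1) atTop atTop :=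
    tendsto_atTop_add_const_right _ _ (tendsto_atTop_add_const_left _ _ tendsto_natCast_atTop_atTop)
  filter_upwards [hlarge.eventually_ge_atTop 2] with k hk
  have hGamma : 1 ≤ Gamma (ν + k + 1) := by
    simpa [Gamma_two] using Gamma_strictMonoOn_Ici.monotoneOn self_mem_Ici hk hk
  rw [norm_div, norm_pow, norm_eq_abs, norm_of_nonneg (by positivity)]
  gcongr
  exact le_mul_of_one_le_left (by positivity) hGamma

theorem inv_Gamma_eq_mul_inv_Gamma_add_one (s : ℝ) : (Gamma s)⁻¹ = s * (Gamma (s + 1))⁻¹ := by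
  rcases eq_or_ne s 0 with rfl | hs
  · simp [Gamma_zero]
  · rw [Gamma_add_one hs, mul_inv, mul_inv_cancel_left₀ hs]

theorem besselClifford_zero (ν : ℝ) : besselClifford ν 0 = (Gamma (ν + 1))⁻¹ := by
  rw [besselClifford, tsum_eq_single 0 fun k hk ↦ by simp [hk]]
  simp

theorem besselClifford_nonneg {ν z : ℝ} (hν : -1 ≤ ν) (hz : 0 ≤ z) : 0 ≤ besselClifford ν z := by
  refine tsum_nonneg fun k ↦ ?_
  have : 0 ≤ ν + k + 1 := by linarith [k.cast_nonneg (α := ℝ)]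
  positivity

theorem succ_mul_div_Gamma_mul_factorial (ν c : ℝ) (k : ℕ) :
    ((k + 1 : ℕ) : ℝ) * c / (Gamma (ν + (k + 1 : ℕ) + 1) * (k + 1).factorial) =
      c / (Gamma (ν + 1 + k + 1) * k.factorial) := by
  rw [Nat.factorial_succ, Nat.cast_mul, mul_left_comm,
    mul_div_mul_left _ _ (Nat.cast_ne_zero.2 k.succ_ne_zero)]
  congr 3
  push_cast
  ring

theorem hasDerivAt_besselClifford (ν z : ℝ) :
    HasDerivAt (besselClifford ν) (besselClifford (ν + 1) z) z := by
  have hsummable : ∀ y : ℝ, Summable fun k : ℕ ↦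
      k * y ^ (k - 1) / (Gamma (ν + k + 1) * k.factorial) := by
    intro y
    rw [← summable_nat_add_iff 1]
    simpa only [Nat.add_sub_cancel, succ_mul_div_Gamma_mul_factorial] using
      summable_besselClifford (ν + 1) y
  have hderiv := hasDerivAt_tsum_of_isPreconnected (hsummable (|z| + 1)).norm Metric.isOpen_ball
    (convex_ball (0 : ℝ) (|z| + 1)).isPreconnected
    (fun k y _ ↦ (hasDerivAt_pow k y).div_const _) (fun k y hy ↦ ?_)
    (Metric.mem_ball_self (by positivity)) (summable_besselClifford ν 0)
    (show z ∈ Metric.ball (0 : ℝ) (|z| + 1) by simp)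
  · refine hderiv.congr_deriv ?_
    rw [(hsummable z).tsum_eq_zero_add]
    simp only [Nat.add_sub_cancel, succ_mul_div_Gamma_mul_factorial]
    simp [besselClifford]
  · rw [mem_ball_zero_iff, norm_eq_abs] at hy
    have hz : 0 ≤ |z| + 1 := by positivity
    simp only [norm_div, norm_mul, norm_pow, norm_eq_abs y, norm_of_nonneg hz]
    gcongr

theorem continuous_besselClifford (ν : ℝ) : Continuous (besselClifford ν) :=
  continuous_iff_continuousAt.2 fun z ↦ (hasDerivAt_besselClifford ν z).continuousAt

theorem besselClifford_eq_add (ν z : ℝ) :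
    besselClifford ν z =
      (ν + 1) * besselClifford (ν + 1) z + z * besselClifford (ν + 2) z := by
  have hshift : HasSum (fun k : ℕ ↦ k * z ^ k / (Gamma (ν + 1 + k + 1) * k.factorial))
      (z * besselClifford (ν + 2) z) := by
    rw [← hasSum_nat_add_iff' 1]
    simp only [Finset.sum_range_one, Nat.cast_zero, zero_mul, zero_div, sub_zero,
      succ_mul_div_Gamma_mul_factorial]
    simp only [pow_succ', mul_div_assoc, add_assoc ν 1 1, one_add_one_eq_two]
    exact (summable_besselClifford (ν + 2) z).hasSum.mul_left z
  have hmain := ((summable_besselClifford (ν + 1) z).hasSum.mul_left (ν + 1)).add hshift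
  refine Eq.trans (tsum_congr fun k ↦ ?_) hmain.tsum_eq
  rw [div_eq_mul_inv, mul_inv, inv_Gamma_eq_mul_inv_Gamma_add_one]
  ring_nf

theorem besselI_eq_rpow_mul_besselClifford (ν : ℝ) {x : ℝ} (hx : 0 < x) :
    besselI ν x = (x / 2) ^ ν * besselClifford ν ((x / 2) ^ 2) := by
  rw [besselI, besselClifford, ← tsum_mul_left]
  refine tsum_congr fun k ↦ ?_
  rw [rpow_add (by positivity), ← Nat.cast_ofNat, ← Nat.cast_mul, rpow_natCast, pow_mul,
    mul_div_assoc]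

theorem besselI_nonneg {ν x : ℝ} (hν : -1 ≤ ν) (hx : 0 < x) : 0 ≤ besselI ν x := by
  rw [besselI_eq_rpow_mul_besselClifford ν hx]
  exact mul_nonneg (by positivity) (besselClifford_nonneg hν (by positivity))

theorem hasDerivAt_besselI {x : ℝ} (hx : 0 < x) (ν : ℝ) :
    HasDerivAt (besselI ν) (besselI (ν + 1) x + ν / x * besselI ν x) x := by
  have hhalf := (hasDerivAt_id' x).div_const 2
  have hderiv := (hhalf.rpow_const (p := ν) (.inl (by positivity))).mul
    ((hasDerivAt_besselClifford ν ((x / 2) ^ 2)).comp x (hhalf.pow 2))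
  refine (hderiv.congr_of_eventuallyEq ?_).congr_deriv ?_
  · filter_upwards [lt_mem_nhds hx] with y hy using besselI_eq_rpow_mul_besselClifford ν hy
  · rw [besselI_eq_rpow_mul_besselClifford ν hx, besselI_eq_rpow_mul_besselClifford (ν + 1) hx,
      rpow_sub_one (by positivity), rpow_add_one (by positivity)]
    simp only [Function.comp_apply, Pi.pow_apply]
    field_simp
    ring

theorem besselI_sub_besselI_add_two {x : ℝ} (hx : 0 < x) (ν : ℝ) :
    besselI ν x - besselI (ν + 2) x = 2 * (ν + 1) / x * besselI (ν + 1) x := by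
  rw [besselI_eq_rpow_mul_besselClifford ν hx, besselI_eq_rpow_mul_besselClifford (ν + 1) hx,
    besselI_eq_rpow_mul_besselClifford (ν + 2) hx, besselClifford_eq_add ν,
    rpow_add_one (by positivity), rpow_add (by positivity), rpow_two]
  field_simp
  ring

theorem isBesselPair_besselI (ν : ℝ) : IsBesselPair ν (besselI ν) (besselI (ν + 1)) where
  hasDerivAt_fst x hx := hasDerivAt_besselI hx ν
  hasDerivAt_snd x hx := by
    refine (hasDerivAt_besselI hx (ν + 1)).congr_deriv ?_
    rw [add_assoc, one_add_one_eq_two]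
    linear_combination -besselI_sub_besselI_add_two hx ν

theorem continuousOn_rpow_mul_besselI {ν a : ℝ} (ha : a ≠ 0) (haν : 0 < a + ν) :
    ContinuousOn (fun t ↦ t ^ a * besselI ν t) (Ici 0) := by
  have hcont : Continuous fun t : ℝ ↦
      (1 / 2) ^ ν * t ^ (a + ν) * besselClifford ν ((t / 2) ^ 2) := by
    have := continuous_besselClifford ν
    have : Continuous fun t : ℝ ↦ t ^ (a + ν) := continuous_rpow_const haν.le
    fun_prop
  refine hcont.continuousOn.congr fun t ht ↦ ?_
  rcases eq_or_lt_of_le (mem_Ici.1 ht) with rfl | ht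
  · simp [zero_rpow ha, zero_rpow haν.ne']
  · simp only [besselI_eq_rpow_mul_besselClifford ν ht]
    rw [rpow_add ht, div_eq_mul_one_div t 2, mul_rpow ht.le (by norm_num)]
    ring

theorem one_sub_div_mul_besselI_le_besselI_succ {ν x : ℝ} (hν : 1 / 2 ≤ ν) (hx : 0 < x) :
    (1 - (ν + 1 / 2) / x) * besselI ν x ≤ besselI (ν + 1) x := by
  have hmono := (isBesselPair_besselI ν).monotoneOn_exp_mul_sqrt_mul (one_pow 2) hν
    fun x ↦ besselI_nonneg (by linarith)
  set D : ℝ → ℝ := fun y ↦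
    exp (1 * y) * √y * (besselI (ν + 1) y - (1 - (ν + 1 / 2) / y) * besselI ν y)
  -- Left of `ν + 1 / 2` the coefficient of `I_ν` is nonpositive, so `0 ≤ D` there.
  obtain ⟨y, hy, hyν, hyx⟩ : ∃ y, 0 < y ∧ y ≤ ν + 1 / 2 ∧ y ≤ x :=
    ⟨min x (ν + 1 / 2), lt_min hx (by linarith), min_le_right _ _, min_le_left _ _⟩
  have hDy : 0 ≤ D y := by
    have hcoeff : 1 - (ν + 1 / 2) / y ≤ 0 := sub_nonpos.2 ((one_le_div hy).2 hyν)
    have := mul_nonpos_of_nonpos_of_nonneg hcoeff (besselI_nonneg (ν := ν) (by linarith) hy)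
    exact mul_nonneg (by positivity)
      (by linarith [besselI_nonneg (ν := ν + 1) (by linarith) hy])
  have := nonneg_of_mul_nonneg_right (hDy.trans (hmono hy hx hyx)) (by positivity)
  linarith

end BesselI

section Product

theorem wronskian_besselI_besselK_le {ν x : ℝ} (hν : -(1 / 2) ≤ ν) (hx : 0 < x) :
    x * (besselI ν x * besselK (ν + 1) x + besselI (ν + 1) x * besselK ν x) ≤
      (besselClifford ν ((x / 2) ^ 2) + x / 2 * besselClifford (ν + 1) ((x / 2) ^ 2)) *
        Gamma (ν + 1) := by
  have hKν : besselK ν x ≤ besselK (ν + 1) x := besselK_le_besselK_of_abs_le hx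
    (abs_le_abs (by linarith) (by linarith))
  have hK := besselK_le_rpow_mul_Gamma (μ := ν + 1) (by linarith) hx
  have hI := besselI_nonneg (ν := ν) (by linarith) hx
  have hI' := besselI_nonneg (ν := ν + 1) (by linarith) hx
  calc x * (besselI ν x * besselK (ν + 1) x + besselI (ν + 1) x * besselK ν x)
      ≤ x * (besselI ν x * besselK (ν + 1) x + besselI (ν + 1) x * besselK (ν + 1) x) := by gcongr
    _ = x * (besselI ν x + besselI (ν + 1) x) * besselK (ν + 1) x := by ring
    _ ≤ x * (besselI ν x + besselI (ν + 1) x) * ((2 / x) ^ (ν + 1) * Gamma (ν + 1) / 2) := by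
        gcongr
    _ = _ := by
        rw [besselI_eq_rpow_mul_besselClifford ν hx, besselI_eq_rpow_mul_besselClifford _ hx,
          ← inv_div x 2, inv_rpow (by positivity), rpow_add_one (by positivity)]
        field_simp

theorem wronskian_besselI_besselK_le_one {ν x : ℝ} (hν : -(1 / 2) ≤ ν) (hx : 0 < x) :
    x * (besselI ν x * besselK (ν + 1) x + besselI (ν + 1) x * besselK ν x) ≤ 1 := by
  have hcont : Continuous fun y ↦ (besselClifford ν ((y / 2) ^ 2) +
      y / 2 * besselClifford (ν + 1) ((y / 2) ^ 2)) * Gamma (ν + 1) := by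
    have := continuous_besselClifford ν
    have := continuous_besselClifford (ν + 1)
    fun_prop
  have hlim : Tendsto (fun y ↦ (besselClifford ν ((y / 2) ^ 2) +
      y / 2 * besselClifford (ν + 1) ((y / 2) ^ 2)) * Gamma (ν + 1)) (𝓝[>] 0) (𝓝 1) := by
    have hGamma : Gamma (ν + 1) ≠ 0 := (Gamma_pos_of_pos (by linarith)).ne'
    refine (hcont.tendsto' 0 1 ?_).mono_left nhdsWithin_le_nhds
    simp [besselClifford_zero, hGamma]
  refine ge_of_tendsto hlim ?_
  filter_upwards [self_mem_nhdsWithin] with y hy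
  refine le_trans (le_of_eq ?_) (wronskian_besselI_besselK_le hν hy)
  linear_combination (isBesselPair_besselI ν).mul_wronskian_eq (isBesselPair_besselK ν) hx hy

theorem mul_besselI_add_besselI_succ_mul_besselK_le_one {ν x : ℝ} (hν : -(1 / 2) ≤ ν)
    (hx : 0 < x) : x * ((besselI ν x + besselI (ν + 1) x) * besselK ν x) ≤ 1 := by
  have hKν : besselK ν x ≤ besselK (ν + 1) x := besselK_le_besselK_of_abs_le hx
    (abs_le_abs (by linarith) (by linarith))
  have hI := besselI_nonneg (ν := ν) (by linarith) hx
  refine le_trans ?_ (wronskian_besselI_besselK_le_one hν hx)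
  rw [add_mul]
  gcongr

theorem mul_besselI_mul_besselK_le_half {ν x : ℝ} (hν : 1 / 2 ≤ ν) (hx : 0 < x) :
    x * (besselI ν x * besselK ν x) ≤ 1 / 2 := by
  have hI := mul_le_mul_of_nonneg_right (one_sub_div_mul_besselI_le_besselI_succ hν hx)
    (besselK_nonneg ν x)
  have hK := mul_le_mul_of_nonneg_left (one_add_div_mul_besselK_le_besselK_succ hν hx)
    (besselI_nonneg (ν := ν) (by linarith) hx)
  have hsum : 2 * (x * (besselI ν x * besselK ν x)) ≤ 1 :=
    calc 2 * (x * (besselI ν x * besselK ν x))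
        = x * (besselI ν x * ((1 + (ν + 1 / 2) / x) * besselK ν x) +
            (1 - (ν + 1 / 2) / x) * besselI ν x * besselK ν x) := by ring
      _ ≤ x * (besselI ν x * besselK (ν + 1) x + besselI (ν + 1) x * besselK ν x) := by gcongr
      _ ≤ 1 := wronskian_besselI_besselK_le_one (by linarith) hx
  linarith

end Product

section Integral

variable {β ν x : ℝ}

theorem intervalIntegrable_exp_mul_rpow_mul_besselI (β : ℝ) (hν : -(1 / 2) < ν) (hx : 0 ≤ x) :
    IntervalIntegrable (fun t ↦ exp (β * t) * t ^ ν * besselI ν t) volume 0 x := by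
  have hcont : Continuous fun t ↦ (1 / 2) ^ ν * exp (β * t) * besselClifford ν ((t / 2) ^ 2) := by
    have := continuous_besselClifford ν
    fun_prop
  refine ((intervalIntegral.intervalIntegrable_rpow' (r := 2 * ν) (by linarith)).continuousOn_mul
    hcont.continuousOn).congr fun t ht ↦ ?_
  have ht0 : 0 < t := by
    rw [uIoc_of_le hx] at ht
    exact ht.1
  simp only [besselI_eq_rpow_mul_besselClifford ν ht0]
  rw [two_mul, rpow_add ht0, div_eq_mul_one_div t 2, mul_rpow ht0.le (by norm_num)]
  ring

theorem hasDerivAt_exp_mul_rpow_mul_besselI (β ν : ℝ) (hx : 0 < x) :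
    HasDerivAt (fun t ↦ exp (β * t) * (t ^ ν * besselI ν t))
      (exp (β * x) * x ^ ν * ((β + 2 * ν / x) * besselI ν x + besselI (ν + 1) x)) x := by
  refine ((((hasDerivAt_id' x).const_mul β).exp).mul
    ((hasDerivAt_rpow_const (.inl hx.ne')).mul (hasDerivAt_besselI hx ν))).congr_deriv ?_
  simp only [Pi.mul_apply]
  rw [rpow_sub_one hx.ne']
  field_simp
  ring

theorem mul_integral_exp_mul_rpow_mul_besselI_le (β : ℝ) (hν : 1 / 2 ≤ ν) (hx : 0 ≤ x) :
    (1 + β) * ∫ t in (0 : ℝ)..x, exp (β * t) * t ^ ν * besselI ν t ≤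
      exp (β * x) * (x ^ ν * besselI ν x) := by
  have hpoint : ∀ t ∈ Ioo 0 x, (1 + β) * (exp (β * t) * t ^ ν * besselI ν t) ≤
      exp (β * t) * t ^ ν * ((β + 2 * ν / t) * besselI ν t + besselI (ν + 1) t) := by
    intro t ⟨ht, _⟩
    have hratio := one_sub_div_mul_besselI_le_besselI_succ hν ht
    have hextra : 0 ≤ (ν - 1 / 2) / t * besselI ν t :=
      mul_nonneg (div_nonneg (by linarith) ht.le) (besselI_nonneg (by linarith) ht)
    calc (1 + β) * (exp (β * t) * t ^ ν * besselI ν t)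
        = exp (β * t) * t ^ ν * ((1 + β) * besselI ν t) := by ring
      _ ≤ exp (β * t) * t ^ ν * ((β + 2 * ν / t) * besselI ν t + besselI (ν + 1) t) := by
          refine mul_le_mul_of_nonneg_left ?_ (by positivity)
          linear_combination hratio + hextra
  have hcont : ContinuousOn (fun t ↦ exp (β * t) * (t ^ ν * besselI ν t)) (Icc 0 x) :=
    (Continuous.continuousOn (by fun_prop)).mul ((continuousOn_rpow_mul_besselI (by linarith)
      (by linarith)).mono Icc_subset_Ici_self)
  have hint := (intervalIntegrable_exp_mul_rpow_mul_besselI (ν := ν) β (by linarith) hx).const_mul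
    (1 + β)
  rw [← intervalIntegral.integral_const_mul]
  simpa [zero_rpow (by linarith : ν ≠ 0)] using
    intervalIntegral.integral_le_sub_of_hasDeriv_right_of_le hx hcont
      (fun t ht ↦ (hasDerivAt_exp_mul_rpow_mul_besselI β ν ht.1).hasDerivWithinAt)
      ((intervalIntegrable_iff_integrableOn_Icc_of_le hx).1 hint) hpoint

theorem hasDerivAt_exp_mul_rpow_succ_mul_besselI_add (β ν : ℝ) (hx : 0 < x) :
    HasDerivAt (fun t ↦ exp (β * t) * (t ^ (ν + 1) * (besselI ν t + besselI (ν + 1) t)))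
      ((1 + β) * (exp (β * x) * (x ^ (ν + 1) * (besselI ν x + besselI (ν + 1) x))) +
        (2 * ν + 1) * (exp (β * x) * x ^ ν * besselI ν x)) x := by
  have h := isBesselPair_besselI ν
  refine ((((hasDerivAt_id' x).const_mul β).exp).mul ((hasDerivAt_rpow_const (.inl hx.ne')).mul
    ((h.hasDerivAt_fst x hx).add (h.hasDerivAt_snd x hx)))).congr_deriv ?_
  simp only [Pi.mul_apply, Pi.add_apply]
  rw [add_sub_cancel_right, rpow_add_one hx.ne']
  field_simp
  ring

theorem continuousOn_exp_mul_rpow_succ_mul_besselI_add (β : ℝ) (hν : -(1 / 2) < ν) :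
    ContinuousOn (fun t ↦ exp (β * t) * (t ^ (ν + 1) * (besselI ν t + besselI (ν + 1) t)))
      (Ici 0) := by
  simp only [mul_add (_ ^ _)]
  exact (Continuous.continuousOn (by fun_prop)).mul
    ((continuousOn_rpow_mul_besselI (by linarith) (by linarith)).add
      (continuousOn_rpow_mul_besselI (by linarith) (by linarith)))

theorem mul_integral_exp_neg_mul_rpow_mul_besselI (hν : -(1 / 2) < ν) (hx : 0 ≤ x) :
    (2 * ν + 1) * ∫ t in (0 : ℝ)..x, exp (-t) * t ^ ν * besselI ν t =
      exp (-x) * (x ^ (ν + 1) * (besselI ν x + besselI (ν + 1) x)) := by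
  have hint := (intervalIntegrable_exp_mul_rpow_mul_besselI (-1) hν hx).const_mul (2 * ν + 1)
  have hFTC := intervalIntegral.integral_eq_sub_of_hasDerivAt_of_le hx
    ((continuousOn_exp_mul_rpow_succ_mul_besselI_add (-1) hν).mono Icc_subset_Ici_self)
    (fun t ht ↦ (hasDerivAt_exp_mul_rpow_succ_mul_besselI_add (-1) ν ht.1).congr_deriv
      (by rw [add_neg_cancel, zero_mul, zero_add])) hint
  simpa [zero_rpow (by linarith : ν + 1 ≠ 0)] using hFTC

theorem mul_integral_exp_mul_rpow_succ_mul_besselI_le (hβ : -1 < β) (hν : -(1 / 2) < ν)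
    (hx : 0 ≤ x) :
    (1 + β) * ∫ t in (0 : ℝ)..x, exp (β * t) * (t ^ (ν + 1) * besselI ν t) ≤
      exp (β * x) * (x ^ (ν + 1) * (besselI ν x + besselI (ν + 1) x)) := by
  have hpoint : ∀ t ∈ Ioo 0 x, (1 + β) * (exp (β * t) * (t ^ (ν + 1) * besselI ν t)) ≤
      (1 + β) * (exp (β * t) * (t ^ (ν + 1) * (besselI ν t + besselI (ν + 1) t))) +
        (2 * ν + 1) * (exp (β * t) * t ^ ν * besselI ν t) := by
    intro t ⟨ht, _⟩
    have hβ' : 0 ≤ 1 + β := by linarith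
    have hν' : 0 ≤ 2 * ν + 1 := by linarith
    have hI := besselI_nonneg (ν := ν) (by linarith) ht
    have hI' := besselI_nonneg (ν := ν + 1) (by linarith) ht
    refine le_add_of_le_of_nonneg ?_ (by positivity)
    gcongr
    exact le_add_of_nonneg_right hI'
  have hcont : ContinuousOn (fun t ↦ (1 + β) * (exp (β * t) * (t ^ (ν + 1) * besselI ν t)))
      (Icc 0 x) :=
    continuousOn_const.mul ((Continuous.continuousOn (by fun_prop)).mul
      ((continuousOn_rpow_mul_besselI (by linarith) (by linarith)).mono Icc_subset_Ici_self))
  rw [← intervalIntegral.integral_const_mul]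
  simpa [zero_rpow (by linarith : ν + 1 ≠ 0)] using
    intervalIntegral.integral_le_sub_of_hasDeriv_right_of_le hx
      ((continuousOn_exp_mul_rpow_succ_mul_besselI_add β hν).mono Icc_subset_Ici_self)
      (fun t ht ↦ (hasDerivAt_exp_mul_rpow_succ_mul_besselI_add β ν ht.1).hasDerivWithinAt)
      hcont.integrableOn_Icc hpoint

-- Split `x = t + (x - t)` and use `u ≤ exp u` at `u = (1 + β) (x - t)`.
theorem one_add_mul_mul_exp_mul_le (β x t : ℝ) :
    (1 + β) * x * exp (β * t) ≤ (1 + β) * t * exp (β * t) + exp ((1 + β) * x) * exp (-t) := by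
  have hle : (1 + β) * (x - t) ≤ exp ((1 + β) * (x - t)) := by
    linarith [add_one_le_exp ((1 + β) * (x - t))]
  have hexp : exp ((1 + β) * x) * exp (-t) = exp ((1 + β) * (x - t)) * exp (β * t) := by
    rw [← exp_add, ← exp_add]
    ring_nf
  rw [hexp]
  linear_combination mul_le_mul_of_nonneg_right hle (exp_pos (β * t)).le

theorem mul_mul_integral_exp_mul_rpow_mul_besselI_le (hβ : -1 < β) (hν : -(1 / 2) < ν)
    (hx : 0 ≤ x) :
    (1 + β) * x * ∫ t in (0 : ℝ)..x, exp (β * t) * t ^ ν * besselI ν t ≤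
      (1 + 1 / (2 * ν + 1)) *
        (exp (β * x) * (x ^ (ν + 1) * (besselI ν x + besselI (ν + 1) x))) := by
  have hint := intervalIntegrable_exp_mul_rpow_mul_besselI β hν hx
  have hint_neg : IntervalIntegrable (fun t ↦ exp (-t) * t ^ ν * besselI ν t) volume 0 x := by
    simpa only [neg_one_mul] using intervalIntegrable_exp_mul_rpow_mul_besselI (-1) hν hx
  have hint_succ : IntervalIntegrable (fun t ↦ exp (β * t) * (t ^ (ν + 1) * besselI ν t))
      volume 0 x :=
    ContinuousOn.intervalIntegrable_of_Icc hx ((Continuous.continuousOn (by fun_prop)).mul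
      ((continuousOn_rpow_mul_besselI (by linarith) (by linarith)).mono Icc_subset_Ici_self))
  have hpoint : ∀ t ∈ Ioo 0 x, (1 + β) * x * (exp (β * t) * t ^ ν * besselI ν t) ≤
      (1 + β) * (exp (β * t) * (t ^ (ν + 1) * besselI ν t)) +
        exp ((1 + β) * x) * (exp (-t) * t ^ ν * besselI ν t) := by
    intro t ⟨ht, _⟩
    have hI : 0 ≤ t ^ ν * besselI ν t :=
      mul_nonneg (by positivity) (besselI_nonneg (by linarith) ht)
    rw [rpow_add_one ht.ne']
    linear_combination mul_le_mul_of_nonneg_right (one_add_mul_mul_exp_mul_le β x t) hI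
  have hmono := intervalIntegral.integral_mono_on_of_le_Ioo hx (hint.const_mul _)
    ((hint_succ.const_mul _).add (hint_neg.const_mul _)) hpoint
  rw [intervalIntegral.integral_add (hint_succ.const_mul _) (hint_neg.const_mul _)] at hmono
  simp only [intervalIntegral.integral_const_mul] at hmono
  have hsucc := mul_integral_exp_mul_rpow_succ_mul_besselI_le hβ hν hx
  have hneg : ∫ t in (0 : ℝ)..x, exp (-t) * t ^ ν * besselI ν t =
      exp (-x) * (x ^ (ν + 1) * (besselI ν x + besselI (ν + 1) x)) / (2 * ν + 1) := by
    rw [← mul_integral_exp_neg_mul_rpow_mul_besselI hν hx,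
      mul_div_cancel_left₀ _ (by linarith : 2 * ν + 1 ≠ 0)]
  have hexp : exp ((1 + β) * x) * exp (-x) = exp (β * x) := by
    rw [← exp_add]
    ring_nf
  rw [hneg, ← mul_div_assoc, ← mul_assoc, hexp] at hmono
  linear_combination hmono + hsucc

theorem exp_neg_mul_besselK_div_rpow_mul_integral_le_of_half_le (hβ : -1 < β) (hν : 1 / 2 ≤ ν)
    (hx : 0 < x) :
    exp (-β * x) * besselK ν x / x ^ (ν - 1) *
        ∫ t in (0 : ℝ)..x, exp (β * t) * t ^ ν * besselI ν t ≤
      1 / (2 * (1 + β)) := by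
  have hβ' : 0 < 1 + β := by linarith
  have hK := besselK_nonneg ν x
  rw [← div_div, le_div_iff₀ hβ']
  calc _ = exp (-β * x) * besselK ν x / x ^ (ν - 1) *
          ((1 + β) * ∫ t in (0 : ℝ)..x, exp (β * t) * t ^ ν * besselI ν t) := by ring
    _ ≤ exp (-β * x) * besselK ν x / x ^ (ν - 1) * (exp (β * x) * (x ^ ν * besselI ν x)) := by
        refine mul_le_mul_of_nonneg_left ?_ (by positivity)
        exact mul_integral_exp_mul_rpow_mul_besselI_le β hν hx.le
    _ = x * (besselI ν x * besselK ν x) := by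
        rw [rpow_sub_one hx.ne', neg_mul, exp_neg]
        field_simp
    _ ≤ 1 / 2 := mul_besselI_mul_besselK_le_half hν hx

theorem exp_neg_mul_besselK_div_rpow_mul_integral_le (hβ : -1 < β) (hν : -(1 / 2) < ν)
    (hx : 0 < x) :
    exp (-β * x) * besselK ν x / x ^ (ν - 1) *
        ∫ t in (0 : ℝ)..x, exp (β * t) * t ^ ν * besselI ν t ≤
      (1 + 1 / (2 * ν + 1)) / (1 + β) := by
  have hβ' : 0 < 1 + β := by linarith
  have hν' : 0 < 2 * ν + 1 := by linarith
  have hK := besselK_nonneg ν x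
  rw [le_div_iff₀ hβ']
  calc _ = exp (-β * x) * besselK ν x / x ^ ν *
          ((1 + β) * x * ∫ t in (0 : ℝ)..x, exp (β * t) * t ^ ν * besselI ν t) := by
        rw [rpow_sub_one hx.ne']
        field_simp
    _ ≤ exp (-β * x) * besselK ν x / x ^ ν * ((1 + 1 / (2 * ν + 1)) *
          (exp (β * x) * (x ^ (ν + 1) * (besselI ν x + besselI (ν + 1) x)))) := by
        refine mul_le_mul_of_nonneg_left ?_ (by positivity)
        exact mul_mul_integral_exp_mul_rpow_mul_besselI_le hβ hν hx.le
    _ = (1 + 1 / (2 * ν + 1)) * (x * ((besselI ν x + besselI (ν + 1) x) * besselK ν x)) := by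
        rw [rpow_add_one hx.ne', neg_mul, exp_neg]
        field_simp
    _ ≤ 1 + 1 / (2 * ν + 1) := mul_le_of_le_one_right (by positivity)
        (mul_besselI_add_besselI_succ_mul_besselK_le_one hν.le hx)

end Integral

end Bessel

theorem stmt_15_general {β ν x : ℝ} (hβ : -1 < β) (hν : -(1 / 2) < ν) (hx : 0 < x) :
    exp (-β * x) * besselK ν x / x ^ (ν - 1) *
        ∫ t in (0 : ℝ)..x, exp (β * t) * t ^ ν * besselI ν t <
      (2 * ν + 7) / (2 * (2 * ν + 1) * (1 + β)) := by
  have hβ' : 0 < 1 + β := by linarith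
  have hν' : 0 < 2 * ν + 1 := by linarith
  rcases le_or_gt (1 / 2) ν with hhalf | hhalf
  · refine (exp_neg_mul_besselK_div_rpow_mul_integral_le_of_half_le hβ hhalf hx).trans_lt ?_
    rw [div_lt_div_iff₀ (by positivity) (by positivity)]
    nlinarith
  · refine (exp_neg_mul_besselK_div_rpow_mul_integral_le hβ hν hx).trans_lt ?_
    rw [one_add_div hν'.ne', div_div, div_lt_div_iff₀ (by positivity) (by positivity)]
    nlinarith [mul_pos hν' hβ']

theorem stmt_15 (β ν : ℝ) (hβ0 : -1 < β) (hβ1 : β < 0) (hν : -(1/2) < ν) (x : ℝ) (hx : 0 < x) :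
    (Real.exp (-β * x) * besselK ν x / x ^ (ν - 1)) *
        ∫ t in (0 : ℝ)..x, Real.exp (β * t) * t ^ ν * besselI ν t <
      (2 * ν + 7) / (2 * (2 * ν + 1) * (1 + β)) :=
  stmt_15_general hβ0 hν hx
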